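/- arXiv:2601.13058 — 2 statements merged into one kernel-verified Lean document; each statement's English description precedes it below -/
import Mathlib

section
/- Let n ≥ 1 and let g be a prefix-exchange map with n parts on the Cantor space ℕ → Bool. If g has finite order as a permutation of ℕ → Bool, then there exist an integer k with 1 ≤ k ≤ n and positive integers l_1, …, l_k with l_1 + ⋯ + l_k ≤ 2^{n−1} such that the order of g equals lcm(l_1, …, l_k). -/
/-- Concatenation of a finite binary word `u` with an infinite sequence `x`
in the Cantor space `ℕ → Bool`. -/
def cat (u : List Bool) (x : ℕ → Bool) : ℕ → Bool :=
  fun i => u.getD i (x (i - u.length))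

/-- A finite family of binary words is a complete prefix code if every point of the
Cantor space has exactly one of the words as a prefix. -/
def IsCompletePrefixCode {m : ℕ} (u : Fin m → List Bool) : Prop :=
  ∀ x : ℕ → Bool, ∃! i : Fin m, ∃ w : ℕ → Bool, x = cat (u i) w

/-- A prefix-exchange map with `n` parts: there are complete prefix codes
`(u_1, …, u_n)` and `(v_1, …, v_n)` and a permutation `σ` of `{1, …, n}` with
`g(u_i ++ w) = v_{σ(i)} ++ w` for all `i` and `w`. -/
def IsPrefixExchange (n : ℕ) (g : (ℕ → Bool) → ℕ → Bool) : Prop :=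
  ∃ u v : Fin n → List Bool, IsCompletePrefixCode u ∧ IsCompletePrefixCode v ∧
    ∃ σ : Equiv.Perm (Fin n),
      ∀ (i : Fin n) (w : ℕ → Bool), g (cat (u i) w) = cat (v (σ i)) w

theorem cat_append (a b : List Bool) (x : ℕ → Bool) : cat (a ++ b) x = cat a (cat b x) := by
  funext i
  simp only [cat, List.getD_eq_getElem?_getD, List.getElem?_append, List.length_append]
  by_cases h : i < a.length
  · simp [h]
  · simp [h, Nat.sub_sub]

theorem cat_inj {a b : List Bool} (h : ∀ x, cat a x = cat b x) : a = b := by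
  have key : ∀ a b : List Bool, (∀ x, cat a x = cat b x) → ¬ a.length < b.length := by
    intro a b h hl
    have h1 := congrFun (h (fun _ => true)) a.length
    have h2 := congrFun (h (fun _ => false)) a.length
    simp [cat, List.getD_eq_getElem?_getD, hl] at h1 h2
    rw [h2] at h1
    exact absurd h1 (by decide)
  have hl : a.length = b.length := by
    have h1 := key a b h
    have h2 := key b a (fun x => (h x).symm)
    omega
  apply List.ext_getElem hl
  intro i hi hi'
  have := congrFun (h (fun _ => true)) i
  simpa [cat, List.getD_eq_getElem?_getD, hi, hi'] using this

theorem cat_ofFn (x : ℕ → Bool) (N : ℕ) :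
    cat (List.ofFn (fun i : Fin N => x i)) (fun i => x (i + N)) = x := by
  funext i
  simp only [cat, List.getD_eq_getElem?_getD, List.length_ofFn, List.getElem?_ofFn]
  by_cases h : i < N
  · simp [h]
  · simp [h]; congr 1; omega

theorem card_children (A C : Finset (List Bool))
    (h : ∀ p b, p ++ [b] ∈ C → p ∈ A) : C.card ≤ 2 * A.card + 1 := by
  classical
  have hsub : C ⊆ insert [] ((A ×ˢ (Finset.univ : Finset Bool)).image (fun q => q.1 ++ [q.2])) := by
    intro w hw
    rcases List.eq_nil_or_concat w with rfl | ⟨p, b, rfl⟩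
    · simp
    · rw [List.concat_eq_append] at hw ⊢
      refine Finset.mem_insert_of_mem (Finset.mem_image.2 ⟨(p, b), ?_, rfl⟩)
      simpa using h p b hw
  calc C.card ≤ _ := Finset.card_le_card hsub
    _ ≤ _ + 1 := Finset.card_insert_le _ _
    _ ≤ (A ×ˢ (Finset.univ : Finset Bool)).card + 1 := by
        gcongr; exact Finset.card_image_le
    _ = _ := by simp [Finset.card_product]; ring

theorem count_bound (k : ℕ) : ∀ (I E : Finset (List Bool)) (e : List Bool → List Bool)
    (_ : E.card = k) (_ : ∀ w ∈ I, e w ∈ E) (r : List Bool → ℕ)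
    (_ : ∀ p b, p ++ [b] ∈ I → p ∈ I ∧ r (e p) < r (e (p ++ [b]))),
    I.card + 1 ≤ 2 ^ k := by
  classical
  induction k with
  | zero =>
    intro I E e hE he r h
    have : I = ∅ := by
      rw [Finset.card_eq_zero] at hE
      subst hE
      exact Finset.eq_empty_of_forall_notMem (fun w hw => by simpa using he w hw)
    simp [this]
  | succ k ih =>
    intro I E e hE he r h
    have hne : E.Nonempty := by
      rw [← Finset.card_pos]; omega
    obtain ⟨d, hd, hmax⟩ := Finset.exists_max_image E r hne
    have hpar : ∀ p b, p ++ [b] ∈ I → p ∈ I.filter (fun w => e w ≠ d) := by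
      intro p b hp
      have h1 := h p b hp
      refine Finset.mem_filter.2 ⟨h1.1, fun hh => ?_⟩
      have h2 := hmax _ (he _ hp)
      rw [hh] at h1
      omega
    have h1 := card_children _ I hpar
    have h2 := ih (I.filter (fun w => e w ≠ d)) (E.erase d) e
      (by rw [Finset.card_erase_of_mem hd]; omega)
      (by
        intro w hw
        rw [Finset.mem_filter] at hw
        exact Finset.mem_erase.2 ⟨hw.2, he w hw.1⟩)
      r (by
        intro p b hp
        rw [Finset.mem_filter] at hp
        exact ⟨hpar p b hp.1, (h p b hp.1).2⟩)
    rw [pow_succ]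
    omega

/-- One step of the induced partial map on words. -/
def Stp {n : ℕ} (u v : Fin n → List Bool) (σ : Equiv.Perm (Fin n)) (p q : List Bool) : Prop :=
  ∃ i x, p = u i ++ x ∧ q = v (σ i) ++ x

/-- Terminal words: no step possible. -/
def Trm {n : ℕ} (u : Fin n → List Bool) (p : List Bool) : Prop :=
  ∀ i x, p ≠ u i ++ x

/-- Words which eventually reach a terminal word. -/
def Bad {n : ℕ} (u v : Fin n → List Bool) (σ : Equiv.Perm (Fin n)) (p : List Bool) : Prop :=
  ∃ d, Relation.ReflTransGen (Stp u v σ) p d ∧ Trm u d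

theorem code_unique {n : ℕ} {u : Fin n → List Bool} (hu : IsCompletePrefixCode u)
    {i j : Fin n} {a b : List Bool} (h : u i ++ a = u j ++ b) : i = j ∧ a = b := by
  have hij : i = j := by
    refine (hu (cat (u i ++ a) (fun _ => true))).unique ⟨_, cat_append _ _ _⟩ ?_
    rw [h]
    exact ⟨_, cat_append _ _ _⟩
  subst hij
  exact ⟨rfl, List.append_cancel_left h⟩

section
variable {n : ℕ} {u v : Fin n → List Bool} {σ : Equiv.Perm (Fin n)}

theorem stp_right (hu : IsCompletePrefixCode u) : Relator.RightUnique (Stp u v σ) := by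
  rintro p q q' ⟨i, x, h1, h2⟩ ⟨j, y, h3, h4⟩
  obtain ⟨rfl, rfl⟩ := code_unique hu (h1.symm.trans h3)
  rw [h2, h4]

theorem stp_left (hv : IsCompletePrefixCode v) {p p' q : List Bool}
    (h : Stp u v σ p q) (h' : Stp u v σ p' q) : p = p' := by
  obtain ⟨i, x, h1, h2⟩ := h
  obtain ⟨j, y, h3, h4⟩ := h'
  obtain ⟨h5, rfl⟩ := code_unique hv (h2.symm.trans h4)
  rw [h1, h3, σ.injective h5]

theorem not_trm_iff {p : List Bool} : ¬ Trm u p ↔ ∃ q, Stp u v σ p q := by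
  unfold Trm Stp
  push Not
  constructor
  · rintro ⟨i, x, h⟩
    exact ⟨_, i, x, h, rfl⟩
  · rintro ⟨q, i, x, h, -⟩
    exact ⟨i, x, h⟩

theorem stp_append {p q : List Bool} (z : List Bool) (h : Stp u v σ p q) :
    Stp u v σ (p ++ z) (q ++ z) := by
  obtain ⟨i, x, rfl, rfl⟩ := h
  exact ⟨i, x ++ z, by simp, by simp⟩

theorem rtg_append {p q : List Bool} (z : List Bool)
    (h : Relation.ReflTransGen (Stp u v σ) p q) :
    Relation.ReflTransGen (Stp u v σ) (p ++ z) (q ++ z) := by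
  induction h with
  | refl => exact .refl
  | tail _ h ih => exact ih.tail (stp_append z h)

theorem trm_prefix {p z : List Bool} (h : Trm u (p ++ z)) : Trm u p := by
  intro i x hx
  exact h i (x ++ z) (by simp [hx])

theorem trm_rtg {d q : List Bool} (h : Trm u d)
    (hr : Relation.ReflTransGen (Stp u v σ) d q) : q = d := by
  rcases Relation.ReflTransGen.cases_head hr with h1 | ⟨c, h1, -⟩
  · exact h1.symm
  · exact absurd h (not_trm_iff.2 ⟨c, h1⟩)

theorem exit_fwd (hu : IsCompletePrefixCode u) {p q d : List Bool} (hd : Trm u d)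
    (h : Relation.ReflTransGen (Stp u v σ) p d) (hq : Relation.ReflTransGen (Stp u v σ) p q) :
    Relation.ReflTransGen (Stp u v σ) q d := by
  rcases Relation.ReflTransGen.total_of_right_unique (stp_right hu) h hq with h1 | h1
  · rw [trm_rtg hd h1]
  · exact h1

theorem exit_unique (hu : IsCompletePrefixCode u) {p d d' : List Bool} (hd : Trm u d)
    (hd' : Trm u d') (h : Relation.ReflTransGen (Stp u v σ) p d)
    (h' : Relation.ReflTransGen (Stp u v σ) p d') : d = d' :=
  (trm_rtg hd' (exit_fwd hu hd h h')) 

theorem bad_prefix (hu : IsCompletePrefixCode u) {p z : List Bool} (h : Bad u v σ (p ++ z)) :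
    Bad u v σ p := by
  obtain ⟨d, h, hd⟩ := h
  generalize hw : p ++ z = w at h
  induction h using Relation.ReflTransGen.head_induction_on generalizing p with
  | refl =>
    subst hw
    exact ⟨p, .refl, trm_prefix hd⟩
  | head h1 _ ih =>
    subst hw
    by_cases hp : Trm u p
    · exact ⟨p, .refl, hp⟩
    · obtain ⟨q, hq⟩ := (not_trm_iff (v := v) (σ := σ)).1 hp
      have := stp_right hu h1 (stp_append z hq)
      obtain ⟨d', h2, h3⟩ := ih this.symm
      exact ⟨d', .head hq h2, h3⟩

theorem bad_stp (hu : IsCompletePrefixCode u) {p q : List Bool}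
    (h : Relation.ReflTransGen (Stp u v σ) p q) :
    Bad u v σ q ↔ Bad u v σ p := by
  constructor
  · rintro ⟨d, h1, h2⟩
    exact ⟨d, h.trans h1, h2⟩
  · rintro ⟨d, h1, h2⟩
    exact ⟨d, exit_fwd hu h2 h1 h, h2⟩

theorem cycle_not_bad (hu : IsCompletePrefixCode u) {w : List Bool}
    (h : Relation.TransGen (Stp u v σ) w w) : ¬ Bad u v σ w := by
  rintro ⟨d, h1, h2⟩
  have key : Relation.TransGen (Stp u v σ) d w := by
    clear h2
    induction h1 with
    | refl => exact h
    | tail _ h1 ih =>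
      obtain ⟨c, hc, hc'⟩ := Relation.TransGen.head'_iff.1 ih
      have := stp_right hu hc h1
      subst this
      exact Relation.TransGen.trans_right hc' h
  obtain ⟨c, hc, -⟩ := Relation.TransGen.head'_iff.1 key
  exact not_trm_iff.2 ⟨c, hc⟩ h2

theorem stp_g {g : (ℕ → Bool) → ℕ → Bool}
    (hg : ∀ (i : Fin n) (w : ℕ → Bool), g (cat (u i) w) = cat (v (σ i)) w)
    {p q : List Bool} (h : Stp u v σ p q) (x : ℕ → Bool) : g (cat p x) = cat q x := by
  obtain ⟨i, y, rfl, rfl⟩ := h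
  rw [cat_append, cat_append, hg]

/-- Long words are not bad. -/
theorem long_not_bad (hu : IsCompletePrefixCode u) {g : (ℕ → Bool) → ℕ → Bool}
    (hg : ∀ (i : Fin n) (w : ℕ → Bool), g (cat (u i) w) = cat (v (σ i)) w)
    {m : ℕ} (hm : 0 < m) (hgm : g^[m] = id) :
    ∃ N, ∀ w : List Bool, N ≤ w.length → ¬ Bad u v σ w := by
  set K := ∑ i, (u i).length with hK
  have hKi : ∀ i, (u i).length ≤ K := fun i =>
    Finset.single_le_sum (f := fun i => (u i).length) (fun _ _ => Nat.zero_le _) (Finset.mem_univ i)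
  have hstep : ∀ w : List Bool, K ≤ w.length → ∃ q, Stp u v σ w q ∧ w.length ≤ q.length + K := by
    intro w hw
    obtain ⟨i, ⟨y, hy⟩, -⟩ := hu (cat w (fun _ => true))
    have hpre : w = u i ++ w.drop (u i).length := by
      have hlt := (hKi i).trans hw
      have htake : w.take (u i).length = u i := by
        apply List.ext_getElem (by simp [hlt])
        intro j hj hj'
        have h1 := congrFun hy j
        have hjw : j < w.length := by omega
        simpa [cat, List.getD_eq_getElem?_getD, hj', hjw] using h1
      conv_lhs => rw [← List.take_append_drop (u i).length w, htake]
    refine ⟨_, ⟨i, _, hpre, rfl⟩, ?_⟩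
    have := hKi i
    simp
    omega
  have hiter : ∀ j : ℕ, ∀ w : List Bool, K * (j + 1) ≤ w.length → ∃ q,
      Relation.TransGen (Stp u v σ) w q ∧ ∀ x, g^[j + 1] (cat w x) = cat q x := by
    intro j
    induction j with
    | zero =>
      intro w hw
      obtain ⟨q, hq, -⟩ := hstep w (by simpa using hw)
      exact ⟨q, .single hq, fun x => stp_g hg hq x⟩
    | succ j ih =>
      intro w hw
      have e1 : K * (j + 1 + 1) = K * (j + 1) + K := by ring
      obtain ⟨q, hq, hl⟩ := hstep w (by omega)
      obtain ⟨q', h1, h2⟩ := ih q (by omega)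
      refine ⟨q', .head hq h1, fun x => ?_⟩
      rw [Function.iterate_succ_apply, stp_g hg hq, h2]
  refine ⟨K * m, fun w hw => ?_⟩
  obtain ⟨j, rfl⟩ : ∃ j, m = j + 1 := ⟨m - 1, by omega⟩
  obtain ⟨q, h1, h2⟩ := hiter j w hw
  rw [hgm] at h2
  have : w = q := cat_inj h2
  rw [← this] at h1
  exact cycle_not_bad hu h1

/-- There are at most `n - 1` terminal words. -/
theorem card_trm (hn : 1 ≤ n) (J : Finset (List Bool))
    (hJ : ∀ w, w ∈ J ↔ Trm u w) : J.card ≤ n - 1 := by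
  classical
  rcases J.eq_empty_or_nonempty with rfl | ⟨w, hw⟩
  · simp
  have hnil : [] ∈ J := by
    rw [hJ] at hw ⊢
    exact trm_prefix (z := w) (by simpa using hw)
  have hsub : (J ×ˢ (Finset.univ : Finset Bool)).image (fun q => q.1 ++ [q.2]) ⊆
      J.erase [] ∪ Finset.univ.image u := by
    intro w hw
    obtain ⟨⟨p, b⟩, hp, rfl⟩ := Finset.mem_image.1 hw
    simp only [Finset.mem_product, Finset.mem_univ, and_true] at hp
    by_cases h : p ++ [b] ∈ J
    · exact Finset.mem_union_left _ (Finset.mem_erase.2 ⟨by simp, h⟩)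
    · apply Finset.mem_union_right
      rw [hJ] at h hp
      unfold Trm at h
      push Not at h
      obtain ⟨i, x, hx⟩ := h
      rcases List.eq_nil_or_concat x with rfl | ⟨y, c, rfl⟩
      · simp at hx; simp [hx]
      · exfalso
        rw [List.concat_eq_append, ← List.append_assoc] at hx
        exact hp i y (List.append_inj' hx rfl).1
  have h1 := Finset.card_le_card hsub
  rw [Finset.card_image_of_injective] at h1
  · have h2 := Finset.card_union_le (J.erase []) (Finset.univ.image u)
    have h3 : (Finset.univ.image u).card ≤ n := by
      simpa using Finset.card_image_le (s := Finset.univ) (f := u)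
    rw [Finset.card_erase_of_mem hnil] at h2
    have h4 : 0 < J.card := Finset.card_pos.2 ⟨_, hnil⟩
    simp [Finset.card_product] at h1
    omega
  · rintro ⟨p, b⟩ ⟨q, c⟩ h
    have := List.append_inj' h rfl
    simp_all

/-- Bound on the number of bad words. -/
theorem card_bad (hn : 1 ≤ n) (hu : IsCompletePrefixCode u) (hv : IsCompletePrefixCode v)
    (I : Finset (List Bool)) (hI : ∀ w, w ∈ I ↔ Bad u v σ w) : I.card + 1 ≤ 2 ^ (n - 1) := by
  classical
  have hex : ∀ w, ∃ d, Bad u v σ w → Relation.ReflTransGen (Stp u v σ) w d ∧ Trm u d := by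
    intro w
    by_cases h : Bad u v σ w
    · obtain ⟨d, hd⟩ := h
      exact ⟨d, fun _ => hd⟩
    · exact ⟨[], fun h' => absurd h' h⟩
  choose e he using hex
  set E := I.filter (fun w => Trm u w) with hE
  have hEm : ∀ w, w ∈ E ↔ Trm u w := by
    intro w
    rw [hE, Finset.mem_filter, hI]
    exact ⟨fun h => h.2, fun h => ⟨⟨w, .refl, h⟩, h⟩⟩
  set r : List Bool → ℕ := fun d => ∑ w ∈ I.filter (fun w => e w = d), (w.length + 1) with hr
  have hb := count_bound E.card I E e rfl
    (by
      intro w hw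
      rw [hEm]
      exact (he w ((hI w).1 hw)).2) r
    (by
      intro p b hpb
      have hpb' := (hI _).1 hpb
      have hp' : Bad u v σ p := bad_prefix hu hpb'
      have hp : p ∈ I := (hI _).2 hp'
      refine ⟨hp, ?_⟩
      set F := I.filter (fun w => e w = e p) with hF
      have hpF : p ∈ F := by simp [hF, hp]
      have hsub : F.image (fun w => w ++ [b]) ⊆ I.filter (fun w => e w = e (p ++ [b])) := by
        intro w hw
        obtain ⟨p', hp'F, rfl⟩ := Finset.mem_image.1 hw
        rw [hF, Finset.mem_filter] at hp'F
        obtain ⟨h1, h2⟩ := hp'F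
        have h3 := he p' ((hI _).1 h1)
        have h4 := he p hp'
        have h5 := he _ hpb'
        rw [h2] at h3
        have hor := Relation.ReflTransGen.total_of_right_unique
          (r := Function.swap (Stp u v σ)) (fun a b c h h' => stp_left hv h h')
          (Relation.reflTransGen_swap.2 h3.1) (Relation.reflTransGen_swap.2 h4.1)
        have hreach : Relation.ReflTransGen (Stp u v σ) (p' ++ [b]) (e (p ++ [b])) := by
          rcases hor with h | h
          · exact exit_fwd hu h5.2 h5.1 (rtg_append [b] (Relation.reflTransGen_swap.1 h))
          · exact (rtg_append [b] (Relation.reflTransGen_swap.1 h)).trans h5.1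
        have hbad : Bad u v σ (p' ++ [b]) := ⟨_, hreach, h5.2⟩
        have h6 := he _ hbad
        exact Finset.mem_filter.2 ⟨(hI _).2 hbad, exit_unique hu h6.2 h5.2 h6.1 hreach⟩
      calc r (e p) = ∑ w ∈ F, (w.length + 1) := rfl
        _ < ∑ w ∈ F, ((w ++ [b]).length + 1) :=
            Finset.sum_lt_sum_of_nonempty ⟨p, hpF⟩ (by intro w _; simp)
        _ = ∑ w ∈ F.image (fun w => w ++ [b]), (w.length + 1) := by
            rw [Finset.sum_image]
            intro a _ c _ h
            exact List.append_cancel_right h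
        _ ≤ _ := Finset.sum_le_sum_of_subset hsub)
  refine hb.trans (Nat.pow_le_pow_right (by norm_num) (card_trm hn E hEm))

end

/-- If a prefix-exchange map `g` with `n ≥ 1` parts has finite order, then its order is
`lcm(l_1, …, l_k)` for some `1 ≤ k ≤ n` and positive integers `l_i` with
`l_1 + ⋯ + l_k ≤ 2^(n-1)`. -/
theorem finite_order_is_lcm_of_orbit_lengths
    (n : ℕ) (hn : 1 ≤ n) (g : (ℕ → Bool) → ℕ → Bool)
    (hpe : IsPrefixExchange n g) (hfin : ∃ m, 0 < m ∧ g^[m] = id) :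
    ∃ k, 1 ≤ k ∧ k ≤ n ∧ ∃ l : Fin k → ℕ,
      (∀ i, 0 < l i) ∧ (∑ i, l i) ≤ 2 ^ (n - 1) ∧
      ∃ ord, 0 < ord ∧ g^[ord] = id ∧ (∀ j, 0 < j → j < ord → g^[j] ≠ id) ∧
        ord = Finset.univ.lcm l := by
  classical
  obtain ⟨u, v, hu, hv, σ, hg⟩ := hpe
  obtain ⟨m, hm, hgm⟩ := hfin
  obtain ⟨N, hN⟩ := long_not_bad hu hg hm hgm
  have hIfin : {w | Bad u v σ w}.Finite := by
    refine (List.finite_length_lt Bool N).subset ?_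
    intro w hw
    by_contra h
    exact hN w (by simpa using h) hw
  set I := hIfin.toFinset with hIdef
  have hI : ∀ w, w ∈ I ↔ Bad u v σ w := by intro w; simp [hIdef]
  have hIcard := card_bad hn hu hv I hI
  -- the leaves
  have hleaf : ∃ T : Finset (List Bool), ∀ w, w ∈ T ↔
      (¬ Bad u v σ w ∧ ∀ p b, w = p ++ [b] → Bad u v σ p) := by
    refine ⟨(insert [] ((I ×ˢ (Finset.univ : Finset Bool)).image (fun q => q.1 ++ [q.2]))).filter
      (fun w => ¬ Bad u v σ w ∧ ∀ p b, w = p ++ [b] → Bad u v σ p), fun w => ?_⟩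
    rw [Finset.mem_filter]
    refine ⟨fun h => h.2, fun h => ⟨?_, h⟩⟩
    rcases List.eq_nil_or_concat w with rfl | ⟨p, b, rfl⟩
    · simp
    · rw [List.concat_eq_append] at h ⊢
      refine Finset.mem_insert_of_mem (Finset.mem_image.2 ⟨(p, b), ?_, rfl⟩)
      simpa [hI] using h.2 p b rfl
  obtain ⟨T, hT⟩ := hleaf
  have hTcard : T.card ≤ 2 ^ (n - 1) := by
    have h1 := card_children I (I ∪ T) (by
      intro p b h
      rw [Finset.mem_union, hI, hT] at h
      rw [hI]
      rcases h with h | h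
      · exact bad_prefix hu h
      · exact h.2 p b rfl)
    rw [Finset.card_union_of_disjoint] at h1
    · omega
    · rw [Finset.disjoint_left]
      intro w h1 h2
      exact ((hT w).1 h2).1 ((hI w).1 h1)
  have hgood : ∀ w, ¬ Bad u v σ w → ∃ q, Stp u v σ w q := fun w hw =>
    not_trm_iff.1 (fun h => hw ⟨w, .refl, h⟩)
  have hgoodIter : ∀ j w, ¬ Bad u v σ w → ∃ q, Relation.ReflTransGen (Stp u v σ) w q ∧
      ∀ x, g^[j] (cat w x) = cat q x := by
    intro j
    induction j with
    | zero => exact fun w _ => ⟨w, .refl, fun x => rfl⟩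
    | succ j ih =>
      intro w hw
      obtain ⟨q, hq⟩ := hgood w hw
      obtain ⟨q', h1, h2⟩ := ih q (fun h => hw ((bad_stp hu (.single hq)).1 h))
      exact ⟨q', .head hq h1, fun x => by rw [Function.iterate_succ_apply, stp_g hg hq, h2]⟩
  have hback : ∀ w q, ¬ Bad u v σ w → Stp u v σ w q → Relation.ReflTransGen (Stp u v σ) q w := by
    intro w q hw hq
    obtain ⟨q', h1, h2⟩ := hgoodIter (m - 1) q (fun h => hw ((bad_stp hu (.single hq)).1 h))
    have : w = q' := by
      apply cat_inj
      intro x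
      rw [← h2 x, ← stp_g hg hq x, ← Function.iterate_succ_apply g,
        show (m - 1).succ = m by omega, hgm]
      rfl
    rwa [← this] at h1
  -- pushing extension along
  have hext : ∀ p z w, ¬ Bad u v σ p → Relation.ReflTransGen (Stp u v σ) (p ++ z) w →
      ∃ p', w = p' ++ z ∧ ¬ Bad u v σ p' := by
    intro p z w hp h
    induction h with
    | refl => exact ⟨p, rfl, hp⟩
    | tail _ h ih =>
      obtain ⟨p', rfl, hp'⟩ := ih
      obtain ⟨q, hq⟩ := hgood p' hp'
      exact ⟨q, stp_right hu h (stp_append z hq), fun h => hp' ((bad_stp hu (.single hq)).1 h)⟩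
  have hTstp : ∀ w q, w ∈ T → Stp u v σ w q → q ∈ T := by
    intro w q hw hq
    rw [hT] at hw ⊢
    refine ⟨fun h => hw.1 ((bad_stp hu (.single hq)).1 h), ?_⟩
    rintro p b rfl
    by_contra hp
    obtain ⟨p', rfl, hp'⟩ := hext p [b] w hp (hback w _ hw.1 hq)
    exact hp' (hw.2 p' b rfl)
  have hφ : ∀ w : T, ∃ q : T, Stp u v σ w q := by
    rintro ⟨w, hw⟩
    obtain ⟨q, hq⟩ := hgood w ((hT w).1 hw).1
    exact ⟨⟨q, hTstp w q hw hq⟩, hq⟩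
  choose φ hφ using hφ
  have hinj : Function.Injective φ := by
    intro a b hab
    have h1 := hφ a
    rw [hab] at h1
    exact Subtype.ext (stp_left hv h1 (hφ b))
  let π : Equiv.Perm T := Equiv.ofBijective φ (Finite.injective_iff_bijective.1 hinj)
  have hπ : ∀ w : T, Stp u v σ w (π w) := hφ
  have hπg : ∀ (j : ℕ) (w : T) x, g^[j] (cat w x) = cat ((π ^ j) w : T) x := by
    intro j
    induction j with
    | zero => intro w x; rfl
    | succ j ih =>
      intro w x
      rw [Function.iterate_succ_apply, stp_g hg (hπ w), ih, pow_succ]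
      rfl
  have hcover : ∀ x : ℕ → Bool, ∃ (w : T) (y : ℕ → Bool), x = cat w y := by
    intro x
    have hex : ∃ L, ¬ Bad u v σ (List.ofFn (fun i : Fin L => x i)) := ⟨N, hN _ (by simp)⟩
    refine ⟨⟨_, (hT _).2 ⟨Nat.find_spec hex, ?_⟩⟩, _, (cat_ofFn x _).symm⟩
    intro p b hpb
    have hlen := congrArg List.length hpb
    simp only [List.length_ofFn, List.length_append, List.length_singleton] at hlen
    have := Nat.find_min hex (m := p.length) (by omega)
    rw [not_not] at this
    convert this using 1
    apply List.ext_getElem (by simp)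
    intro i hi hi'
    have h2 : (p ++ [b])[i]'(by simp; omega) = p[i] := by
      rw [List.getElem_append_left]
    rw [← h2]
    simp [← hpb]
  have hid : ∀ j, g^[j] = id ↔ π ^ j = 1 := by
    intro j
    constructor
    · intro h
      ext w : 2
      apply cat_inj
      intro x
      rw [← hπg, h]
      rfl
    · intro h
      funext x
      obtain ⟨w, y, rfl⟩ := hcover x
      rw [hπg, h]
      rfl
  have hreach : ∀ (w : T) q, Relation.ReflTransGen (Stp u v σ) w q →
      ∃ j : ℕ, ((π ^ j) w : T) = q := by
    intro w q h
    induction h with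
    | refl => exact ⟨0, rfl⟩
    | tail _ h ih =>
      obtain ⟨j, rfl⟩ := ih
      refine ⟨j + 1, ?_⟩
      rw [pow_succ']
      exact stp_right hu (hπ _) h
  have horb : ∀ w : T, ∃ (i : Fin n) (j : ℕ), ((π ^ j) w : T) = u i := by
    rintro w
    suffices ∃ i, Relation.ReflTransGen (Stp u v σ) w (u i) by
      obtain ⟨i, hi⟩ := this
      exact ⟨i, hreach w _ hi⟩
    obtain ⟨w, hw⟩ := w
    rw [hT] at hw
    obtain ⟨hw, hpar⟩ := hw
    rcases List.eq_nil_or_concat w with rfl | ⟨p, b, rfl⟩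
    · obtain ⟨q, i, x, h, -⟩ := hgood _ hw
      have : u i = [] := by
        have := h.symm
        simp at this
        exact this.1
      exact ⟨i, by rw [this]⟩
    · simp only [List.concat_eq_append] at hw hpar ⊢
      obtain ⟨d, hd, hdt⟩ := hpar p b rfl
      have h1 := rtg_append [b] hd
      obtain ⟨q, i, x, h, -⟩ := hgood _ (fun h => hw ((bad_stp hu h1).1 h))
      rcases List.eq_nil_or_concat x with rfl | ⟨y, c, rfl⟩
      · refine ⟨i, ?_⟩
        rw [List.append_nil] at h
        rwa [← h]
      · exfalso
        rw [List.concat_eq_append, ← List.append_assoc] at h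
        exact hdt i y (List.append_inj' h rfl).1
  have hcyc : π.cycleType.card ≤ n := by
    rw [Equiv.Perm.cycleType_def, Multiset.card_map]
    change π.cycleFactorsFinset.card ≤ n
    have hch : ∀ c : π.cycleFactorsFinset, ∃ (i : Fin n) (w : T), (w : List Bool) = u i ∧
        w ∈ c.1.support := by
      rintro ⟨c, hc⟩
      have hc' := Equiv.Perm.mem_cycleFactorsFinset_iff.1 hc
      obtain ⟨w, hw⟩ := hc'.1.nonempty_support
      have hcw := Equiv.Perm.cycle_is_cycleOf hw hc
      obtain ⟨i, j, hij⟩ := horb w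
      refine ⟨i, (π ^ j) w, hij, ?_⟩
      have h3 : w ∈ π.support := Equiv.Perm.mem_cycleFactorsFinset_support_le hc hw
      change (π ^ j) w ∈ c.support
      rw [hcw, Equiv.Perm.mem_support_cycleOf_iff]
      exact ⟨⟨j, by simp⟩, h3⟩
    choose ι W hW hWs using hch
    have hι : Function.Injective ι := by
      intro c c' h
      have h1 : W c = W c' := Subtype.ext (by rw [hW, hW, h])
      apply Subtype.ext
      have h2 := Equiv.Perm.cycle_is_cycleOf (hWs c) c.2
      have h3 := Equiv.Perm.cycle_is_cycleOf (hWs c') c'.2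
      rw [h2, h3, h1]
    simpa using Fintype.card_le_of_injective ι hι
  have hsum : π.cycleType.sum ≤ 2 ^ (n - 1) := by
    rw [Equiv.Perm.sum_cycleType]
    refine le_trans ?_ hTcard
    simpa using Finset.card_le_univ π.support
  have hord : 0 < orderOf π ∧ g^[orderOf π] = id ∧
      ∀ j, 0 < j → j < orderOf π → g^[j] ≠ id := by
    refine ⟨orderOf_pos π, (hid _).2 (pow_orderOf_eq_one π), fun j h1 h2 h3 => ?_⟩
    exact absurd (orderOf_le_of_pow_eq_one h1 ((hid j).1 h3)) (by omega)
  by_cases h0 : π.cycleType.card = 0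
  · refine ⟨1, le_rfl, hn, fun _ => 1, fun _ => one_pos, ?_, orderOf π, hord.1, hord.2.1,
      hord.2.2, ?_⟩
    · simpa using Nat.one_le_two_pow
    · rw [← Equiv.Perm.lcm_cycleType, Multiset.card_eq_zero.1 h0]
      simp
  · obtain ⟨L, hL⟩ : ∃ L : List ℕ, (L : Multiset ℕ) = π.cycleType := Quot.exists_rep _
    rw [← hL] at h0 hcyc hsum
    simp only [Multiset.coe_card, Multiset.sum_coe] at h0 hcyc hsum
    refine ⟨L.length, by omega, hcyc, fun i => L[i], ?_, ?_, orderOf π, hord.1, hord.2.1,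
      hord.2.2, ?_⟩
    · intro i
      have : L[i] ∈ π.cycleType := by
        rw [← hL]; simp
      have := Equiv.Perm.two_le_of_mem_cycleType this
      exact lt_of_lt_of_le Nat.two_pos this
    · simpa using hsum
    · rw [← Equiv.Perm.lcm_cycleType, ← hL]
      apply Nat.dvd_antisymm
      · rw [Multiset.lcm_dvd]
        intro a ha
        obtain ⟨i, hi, rfl⟩ := List.getElem_of_mem (Multiset.mem_coe.1 ha)
        exact Finset.dvd_lcm (f := fun i : Fin L.length => L[i]) (Finset.mem_univ ⟨i, hi⟩)
      · rw [Finset.lcm_dvd_iff]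
        intro i _
        exact Multiset.dvd_lcm (by simp)
end

section
/- For every integer n ≥ 1 there exists a prefix-exchange map with n parts on the Cantor space ℕ → Bool whose order as a permutation is exactly 2^{n−1} (namely the map g_n defined by g_n(1^k 0 w) = 0^k 1 w for 0 ≤ k < n−1 and g_n(1^{n−1} w) = 0^{n−1} w); in particular, the bound 2^{n−1} on the sum of orbit lengths for torsion elements of Thompson's group V represented by trees with n leaves is attained. -/
/-- `g` satisfies the defining rules of the map `g_n`:
`g_n(1^k 0 w) = 0^k 1 w` for `0 ≤ k < n-1`, and `g_n(1^{n-1} w) = 0^{n-1} w`. -/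
def GnRules (n : ℕ) (g : (ℕ → Bool) → ℕ → Bool) : Prop :=
  (∀ k, k < n - 1 → ∀ w : ℕ → Bool,
      g (cat (List.replicate k true ++ [false]) w)
        = cat (List.replicate k false ++ [true]) w) ∧
  (∀ w : ℕ → Bool,
      g (cat (List.replicate (n - 1) true) w) = cat (List.replicate (n - 1) false) w)

/-- Prepend one digit. -/
def cns (b : Bool) (x : ℕ → Bool) : ℕ → Bool
  | 0 => b
  | i + 1 => x i

theorem cat_nil' (x : ℕ → Bool) : cat [] x = x := by
  funext i; simp [cat]

theorem cat_cons' (b : Bool) (u : List Bool) (x : ℕ → Bool) :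
    cat (b :: u) x = cns b (cat u x) := by
  funext i; cases i <;> simp [cat, cns]

theorem cns_eta (x : ℕ → Bool) : cns (x 0) (fun i => x (i + 1)) = x := by
  funext i; cases i <;> rfl

theorem cns_inj {a b : Bool} {x y : ℕ → Bool} (h : cns a x = cns b y) : a = b ∧ x = y :=
  ⟨congrFun h 0, funext fun i => congrFun h (i + 1)⟩

/-- The map `g_(m+1)`, the odometer on the first `m` digits. -/
def odo : ℕ → (ℕ → Bool) → ℕ → Bool
  | 0, x => x
  | m + 1, x => if x 0 then cns false (odo m fun i => x (i + 1))
      else cns true fun i => x (i + 1)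

theorem odo_true (m : ℕ) (x : ℕ → Bool) : odo (m + 1) (cns true x) = cns false (odo m x) := rfl

theorem odo_false (m : ℕ) (x : ℕ → Bool) : odo (m + 1) (cns false x) = cns true x := rfl

theorem odo_two (m : ℕ) (b : Bool) (x : ℕ → Bool) :
    (odo (m + 1))^[2] (cns b x) = cns b (odo m x) := by
  cases b <;> rfl

theorem odo_even (m j : ℕ) (b : Bool) (x : ℕ → Bool) :
    (odo (m + 1))^[2 * j] (cns b x) = cns b ((odo m)^[j] x) := by
  induction j generalizing x with
  | zero => rfl
  | succ j ih =>
    rw [Nat.mul_succ, Function.iterate_add_apply, odo_two, ih, Function.iterate_succ_apply]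

theorem odo_pow (m : ℕ) : (odo m)^[2 ^ m] = id := by
  induction m with
  | zero => rfl
  | succ m ih =>
    funext x
    rw [← cns_eta x, pow_succ', odo_even, ih]; rfl

theorem odo_ne (m : ℕ) : ∀ j, 0 < j → j < 2 ^ m → (odo m)^[j] ≠ id := by
  induction m with
  | zero => intro j h1 h2; simp at h2; omega
  | succ m ih =>
    intro j h1 h2 h
    rw [pow_succ'] at h2
    rcases Nat.even_or_odd' j with ⟨k, rfl | rfl⟩
    · apply ih k (by omega) (by omega)
      funext x
      have := congrFun h (cns true x)
      rw [odo_even] at this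
      exact (cns_inj this).2
    · have := congrFun h (cns true fun _ => true)
      rw [Function.iterate_succ_apply', odo_even, odo_true] at this
      exact Bool.noConfusion (cns_inj this).1

/-- The code words `b^k (!b)` for `k < m` and `b^m`. -/
def wrd (b : Bool) : ℕ → ℕ → List Bool
  | 0, _ => []
  | _ + 1, 0 => [!b]
  | m + 1, k + 1 => b :: wrd b m k

theorem wrd_code (b : Bool) (m : ℕ) : ∀ x : ℕ → Bool,
    ∃! k : ℕ, k ≤ m ∧ ∃ w : ℕ → Bool, x = cat (wrd b m k) w := by
  induction m with
  | zero => intro x; exact ⟨0, ⟨le_rfl, x, (cat_nil' x).symm⟩, fun y hy => by omega⟩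
  | succ m ih =>
    intro x
    by_cases hb : x 0 = b
    · obtain ⟨k, ⟨hk, w, hw⟩, huniq⟩ := ih (fun i => x (i + 1))
      refine ⟨k + 1, ⟨by omega, w, ?_⟩, ?_⟩
      · simp only [wrd]
        rw [cat_cons', ← hw, ← hb, cns_eta]
      · rintro (_ | y) ⟨hy, w', hw'⟩
        · simp only [wrd] at hw'
          rw [cat_cons'] at hw'
          have : x 0 = !b := congrFun hw' 0
          rw [hb] at this
          cases b <;> simp at this
        · simp only [wrd] at hw'
          rw [cat_cons', ← cns_eta x] at hw'
          rw [huniq y ⟨by omega, w', (cns_inj hw').2⟩]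
    · have hb' : x 0 = !b := by cases b <;> simpa using hb
      refine ⟨0, ⟨by omega, fun i => x (i + 1), ?_⟩, ?_⟩
      · simp only [wrd]
        rw [cat_cons', cat_nil', ← hb', cns_eta]
      · rintro (_ | y) ⟨hy, w', hw'⟩
        · rfl
        · simp only [wrd] at hw'
          rw [cat_cons'] at hw'
          exact absurd (congrFun hw' 0) hb

theorem wrd_complete (b : Bool) (m : ℕ) :
    IsCompletePrefixCode (fun i : Fin (m + 1) => wrd b m i) := by
  intro x
  obtain ⟨k, ⟨hk, hw⟩, huniq⟩ := wrd_code b m x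
  exact ⟨⟨k, by omega⟩, hw, fun y hy => Fin.ext (huniq y ⟨by omega, hy⟩)⟩

theorem odo_wrd (m : ℕ) : ∀ (k : ℕ) (w : ℕ → Bool), 
    odo m (cat (wrd true m k) w) = cat (wrd false m k) w := by
  induction m with
  | zero => intro k w; rfl
  | succ m ih =>
    rintro (_ | k) w
    · simp only [wrd, cat_cons', cat_nil']; rfl
    · simp only [wrd, cat_cons', odo_true, ih]

theorem wrd_lt (b : Bool) (m : ℕ) : ∀ k, k < m → wrd b m k = List.replicate k b ++ [!b] := by
  induction m with
  | zero => intro k h; omega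
  | succ m ih =>
    rintro (_ | k) h
    · rfl
    · simp only [wrd, ih k (by omega), List.replicate_succ, List.cons_append]

theorem wrd_self (b : Bool) (m : ℕ) : wrd b m m = List.replicate m b := by
  induction m with
  | zero => rfl
  | succ m ih => simp only [wrd, ih, List.replicate_succ]

/-- For every `n ≥ 1` there is a prefix-exchange map with `n` parts whose order as a
permutation of the Cantor space is exactly `2^(n-1)`, namely the map `g_n`; in
particular the bound `2^(n-1)` on orders of torsion elements of Thompson's group `V`
represented by trees with `n` leaves is attained. -/
theorem exists_prefix_exchange_of_maximal_order (n : ℕ) (hn : 1 ≤ n) :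
    ∃ g : (ℕ → Bool) → ℕ → Bool, GnRules n g ∧ IsPrefixExchange n g ∧
      g^[2 ^ (n - 1)] = id ∧ ∀ j, 0 < j → j < 2 ^ (n - 1) → g^[j] ≠ id := by
  obtain ⟨m, rfl⟩ : ∃ m, n = m + 1 := ⟨n - 1, by omega⟩
  refine ⟨odo m, ⟨?_, ?_⟩, ⟨_, _, wrd_complete true m, wrd_complete false m, 1, ?_⟩,
    odo_pow m, odo_ne m⟩
  · intro k hk w
    have h := odo_wrd m k w
    rw [wrd_lt true m k hk, wrd_lt false m k hk] at h
    exact h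
  · intro w
    have h := odo_wrd m m w
    rw [wrd_self, wrd_self] at h
    exact h
  · intro i w
    exact odo_wrd m i w
end
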